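/- arXiv:2309.15841 — 2 statements merged into one kernel-verified Lean document; each statement's English description precedes it below -/
import Mathlib

section
/- Let X be a finite connected simple graph. Then the characteristic polynomial (over ℚ) of the edge Laplacian N(X) equals the characteristic polynomial of the diagonal matrix D(X) if and only if X is a tree (i.e., X is acyclic). -/
open Matrix

variable {V : Type*} [Fintype V] [DecidableEq V]

/-- The edge adjacency matrix of a graph, indexed by darts. -/
def edgeAdj (R : Type*) [Ring R] (G : SimpleGraph V) [DecidableRel G.Adj] :
    Matrix G.Dart G.Dart R :=
  fun d e => if d.toProd.2 = e.toProd.1 ∧ d.toProd.1 ≠ e.toProd.2 then 1 else 0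

/-- The diagonal matrix with `(d,d)` entry `deg(head d) - 1`. -/
def degDiag (R : Type*) [Ring R] (G : SimpleGraph V) [DecidableRel G.Adj] :
    Matrix G.Dart G.Dart R :=
  Matrix.diagonal fun d => (G.degree d.toProd.2 : R) - 1

/-- The edge Laplacian `N = D - M`. -/
def edgeLap (R : Type*) [Ring R] (G : SimpleGraph V) [DecidableRel G.Adj] :
    Matrix G.Dart G.Dart R :=
  degDiag R G - edgeAdj R G

section Helpers

/-- Over an algebraically closed field, `det (p(A))` only depends on the charpoly of `A`. -/
lemma det_aeval_eq_of_charpoly_eq {n K : Type*} [Fintype n] [DecidableEq n] [Field K]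
    [IsAlgClosed K] (A B : Matrix n n K) (h : A.charpoly = B.charpoly) (p : Polynomial K) :
    (Polynomial.aeval A p).det = (Polynomial.aeval B p).det := by
  have hp := (IsAlgClosed.splits p).eq_prod_roots
  have key : ∀ r : K, (A - algebraMap K (Matrix n n K) r).det
      = (B - algebraMap K (Matrix n n K) r).det := by
    intro r
    have h1 : ∀ C : Matrix n n K, (C - algebraMap K (Matrix n n K) r).det
        = (-1) ^ Fintype.card n * C.charpoly.eval r := by
      intro C
      rw [Matrix.eval_charpoly, ← Matrix.det_neg, neg_sub]
      rfl
    rw [h1, h1, h]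
  rw [hp]
  simp only [map_mul, Polynomial.aeval_C, Matrix.det_mul]
  congr 1
  have h2 : ∀ C : Matrix n n K, ∀ s : Multiset K,
      (Polynomial.aeval C (s.map (fun a => Polynomial.X - Polynomial.C a)).prod).det
      = (s.map (fun a => (C - algebraMap K (Matrix n n K) a).det)).prod := by
    intro C s
    induction s using Multiset.induction_on with
    | empty => simp
    | cons a s ih => simp [ih]
  rw [h2, h2]
  simp only [key]

lemma trace_pow_eq_of_charpoly_eq_closed {n K : Type*} [Fintype n] [DecidableEq n] [Field K]
    [IsAlgClosed K] (A B : Matrix n n K) (h : A.charpoly = B.charpoly) (k : ℕ) :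
    (A ^ k).trace = (B ^ k).trace := by
  rw [Matrix.trace_eq_sum_roots_charpoly, Matrix.trace_eq_sum_roots_charpoly]
  suffices (A ^ k).charpoly = (B ^ k).charpoly by rw [this]
  have : Infinite K := IsAlgClosed.instInfinite
  apply Polynomial.funext
  intro r
  rw [Matrix.eval_charpoly, Matrix.eval_charpoly]
  have := det_aeval_eq_of_charpoly_eq A B h (Polynomial.C r - Polynomial.X ^ k)
  rw [map_sub, map_sub, Polynomial.aeval_C, Polynomial.aeval_C, map_pow, map_pow,
    Polynomial.aeval_X, Polynomial.aeval_X] at this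
  exact this

lemma trace_pow_eq_of_charpoly_eq {n : Type*} [Fintype n] [DecidableEq n]
    (A B : Matrix n n ℚ) (h : A.charpoly = B.charpoly) (k : ℕ) :
    (A ^ k).trace = (B ^ k).trace := by
  have := trace_pow_eq_of_charpoly_eq_closed (A.map (algebraMap ℚ ℂ)) (B.map (algebraMap ℚ ℂ))
    (by rw [Matrix.charpoly_map, Matrix.charpoly_map, h]) k
  rw [← Matrix.map_pow, ← Matrix.map_pow, ← AddMonoidHom.map_trace,
    ← AddMonoidHom.map_trace] at this
  exact (algebraMap ℚ ℂ).injective this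

/-- Homogeneous components of `(D + A)^k`, of degree `j` in `A`. -/
def homComp {n : Type*} [Fintype n] [DecidableEq n] (D A : Matrix n n ℚ) :
    ℕ → ℕ → Matrix n n ℚ
  | 0, 0 => 1
  | 0, _ + 1 => 0
  | k + 1, 0 => homComp D A k 0 * D
  | k + 1, j + 1 => homComp D A k (j + 1) * D + homComp D A k j * A

variable {n : Type*} [Fintype n] [DecidableEq n] (D A : Matrix n n ℚ)

lemma homComp_zero (k : ℕ) : homComp D A k 0 = D ^ k := by
  induction k with
  | zero => simp [homComp]
  | succ k ih => simp [homComp, ih, pow_succ]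

lemma homComp_gt (k j : ℕ) (h : k < j) : homComp D A k j = 0 := by
  induction k generalizing j with
  | zero => obtain ⟨j, rfl⟩ := Nat.exists_eq_succ_of_ne_zero h.ne'; simp [homComp]
  | succ k ih =>
    obtain ⟨j, rfl⟩ := Nat.exists_eq_succ_of_ne_zero (Nat.ne_zero_of_lt h)
    simp [homComp, ih (j + 1) (by omega), ih j (by omega)]

lemma homComp_self (k : ℕ) : homComp D A k k = A ^ k := by
  induction k with
  | zero => simp [homComp]
  | succ k ih => simp [homComp, ih, pow_succ, homComp_gt D A k (k + 1) (by omega)]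

lemma homComp_sum (k : ℕ) : (D + A) ^ k = ∑ j ∈ Finset.range (k + 1), homComp D A k j := by
  induction k with
  | zero => simp [homComp]
  | succ k ih =>
    rw [Finset.sum_range_succ', pow_succ, ih]
    simp only [homComp, Finset.sum_add_distrib, mul_add, ← Finset.sum_mul]
    have : ∑ j ∈ Finset.range (k + 1), homComp D A k (j + 1) + homComp D A k 0
        = ∑ j ∈ Finset.range (k + 1), homComp D A k j := by
      rw [← Finset.sum_range_succ', Finset.sum_range_succ, homComp_gt D A k (k + 1) (by omega),
        add_zero]
    rw [← this, add_mul]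
    abel

lemma pow_nonneg_entries (M : Matrix n n ℚ) (hM : ∀ a b, 0 ≤ M a b) (k : ℕ) :
    ∀ a b, 0 ≤ (M ^ k) a b := by
  induction k with
  | zero => intro a b; rw [pow_zero, Matrix.one_apply]; split_ifs <;> norm_num
  | succ k ih =>
    intro a b
    rw [pow_succ, Matrix.mul_apply]
    exact Finset.sum_nonneg fun c _ => mul_nonneg (ih a c) (hM c b)

lemma mat_pow_succ_ne (M : Matrix n n ℚ) (hM : ∀ a b, 0 ≤ M a b) (k : ℕ) (a b c : n)
    (h1 : (M ^ k) a b ≠ 0) (h2 : M b c ≠ 0) : (M ^ (k + 1)) a c ≠ 0 := by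
  rw [pow_succ, Matrix.mul_apply]
  apply ne_of_gt
  apply Finset.sum_pos'
  · exact fun c' _ => mul_nonneg (pow_nonneg_entries M hM k a c') (hM c' c)
  · exact ⟨b, Finset.mem_univ _, mul_pos
      (lt_of_le_of_ne (pow_nonneg_entries M hM k a b) h1.symm) (lt_of_le_of_ne (hM b c) h2.symm)⟩

lemma homComp_support (f : n → ℚ) (M : Matrix n n ℚ) (hM : ∀ a b, 0 ≤ M a b) (k j : ℕ) (a b : n)
    (h : (M ^ j) a b = 0) : homComp (Matrix.diagonal f) (-M) k j a b = 0 := by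
  induction k generalizing j b with
  | zero =>
    cases j with
    | zero => simpa [homComp] using h
    | succ j => simp [homComp]
  | succ k ih =>
    cases j with
    | zero => simp [homComp, ih 0 b h]
    | succ j =>
      simp only [homComp, Matrix.add_apply, Matrix.mul_diagonal, ih (j + 1) b h, zero_mul, zero_add]
      rw [Matrix.mul_apply]
      apply Finset.sum_eq_zero
      intro c _
      by_cases h1 : (M ^ j) a c = 0
      · rw [ih j c h1, zero_mul]
      · by_cases h2 : M c b = 0
        · simp [h2]
        · exact absurd h (mat_pow_succ_ne M hM j a c b h1 h2)

/-- If `D - M` and `D` have the same charpoly, `M` has no closed walk. -/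
lemma diag_pow_eq_zero (f : n → ℚ) (M : Matrix n n ℚ) (hM : ∀ a b, 0 ≤ M a b)
    (h : (Matrix.diagonal f - M).charpoly = (Matrix.diagonal f).charpoly) (k : ℕ) (hk : 0 < k) :
    ∀ a, (M ^ k) a a = 0 := by
  induction k using Nat.strong_induction_on with
  | _ k ih =>
    obtain ⟨m, rfl⟩ := Nat.exists_eq_succ_of_ne_zero hk.ne'
    have ht := trace_pow_eq_of_charpoly_eq _ _ h (m + 1)
    rw [sub_eq_add_neg, homComp_sum, Finset.sum_range_succ, homComp_self, Finset.sum_range_succ',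
      homComp_zero, Matrix.trace_add, Matrix.trace_add, Matrix.trace_sum, Finset.sum_eq_zero] at ht
    · have h0 : (M ^ (m + 1)).trace = 0 := by
        rw [neg_pow] at ht
        rcases neg_one_pow_eq_or (Matrix n n ℚ) (m + 1) with h1 | h1 <;> simpa [h1] using ht
      intro a
      exact (Finset.sum_eq_zero_iff_of_nonneg
        (fun i _ => pow_nonneg_entries M hM (m + 1) i i)).1 h0 a (Finset.mem_univ _)
    · intro j hj
      have hj := Finset.mem_range.1 hj
      apply Finset.sum_eq_zero
      intro a _
      exact homComp_support f M hM _ _ a a (ih (j + 1) (by omega) (by omega) a)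

/-- If `M` strictly decreases a rank, `D - M` and `D` have the same charpoly. -/
lemma charpoly_eq_of_rank (f : n → ℚ) (M : Matrix n n ℚ) (r : n → ℕ)
    (hr : ∀ a b, M a b ≠ 0 → r b < r a) :
    (Matrix.diagonal f - M).charpoly = (Matrix.diagonal f).charpoly := by
  have hd : ∀ a, M a a = 0 := fun a => by
    by_contra h
    exact lt_irrefl _ (hr a a h)
  have gen : ∀ N : Matrix n n ℚ, (∀ a b, N a b ≠ 0 → r b < r a) →
      (Matrix.diagonal f - N).charpoly = ∏ a, (Polynomial.X - Polynomial.C (f a)) := by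
    intro N hr
    have hd : ∀ a, N a a = 0 := fun a => by
      by_contra h
      exact lt_irrefl _ (hr a a h)
    rw [Matrix.charpoly, Matrix.det_apply, Finset.sum_eq_single 1]
    · simp [Matrix.charmatrix_apply_eq, hd]
    · intro σ _ hσ
      have hne : σ.support.Nonempty := by
        rw [Finset.nonempty_iff_ne_empty]
        simpa using hσ
      obtain ⟨a, ha, hmax⟩ := Finset.exists_max_image σ.support r hne
      have hz : N (σ a) a = 0 := by
        by_contra h
        exact absurd (hr _ _ h) (not_lt.2 (hmax _ (Equiv.Perm.apply_mem_support.2 ha)))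
      rw [Finset.prod_eq_zero (Finset.mem_univ a), smul_zero]
      rw [Matrix.charmatrix_apply_ne _ _ _ (Equiv.Perm.mem_support.1 ha), Matrix.sub_apply,
        Matrix.diagonal_apply_ne _ (Equiv.Perm.mem_support.1 ha), hz]
      simp
    · simp
  rw [gen M hr, ← gen 0 (by simp), sub_zero]

end Helpers

section GraphHelpers

open Classical in
/-- Number of vertices reachable from the head of a dart after deleting its edge. -/
noncomputable def dartRank (G : SimpleGraph V) (d : G.Dart) : ℕ :=
  (Finset.univ.filter fun x => (G.deleteEdges {s(d.toProd.1, d.toProd.2)}).Reachable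
    d.toProd.2 x).card

lemma dartRank_lt (G : SimpleGraph V) (hG : G.IsAcyclic) (d e : G.Dart)
    (h1 : d.toProd.2 = e.toProd.1) (h2 : d.toProd.1 ≠ e.toProd.2) :
    dartRank G e < dartRank G d := by
  obtain ⟨⟨u, v⟩, huv⟩ := d
  obtain ⟨⟨v', w⟩, hvw⟩ := e
  simp only at h1 h2 huv hvw
  subst h1
  have hb : ¬ (G.deleteEdges {s(v, w)}).Reachable w v := by
    intro h
    exact SimpleGraph.isBridge_iff.1 (SimpleGraph.isAcyclic_iff_forall_adj_isBridge.1 hG hvw) h.symm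
  unfold dartRank
  apply Finset.card_lt_card
  rw [Finset.ssubset_iff_of_subset]
  · refine ⟨v, ?_, ?_⟩
    · simp
    · simpa using hb
  · intro x hx
    simp only [Finset.mem_filter, Finset.mem_univ, true_and] at hx ⊢
    have hstart : (G.deleteEdges {s(u, v)}).Reachable v w := by
      apply SimpleGraph.Adj.reachable
      rw [SimpleGraph.deleteEdges_adj]
      refine ⟨hvw, ?_⟩
      simp only [Set.mem_singleton_iff, Sym2.eq_iff]
      rintro (⟨h, h'⟩ | ⟨h, h'⟩)
      · exact huv.ne h.symm
      · exact h2 h'.symm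
    rw [SimpleGraph.reachable_iff_reflTransGen] at hx
    induction hx with
    | refl => exact hstart
    | @tail y z hy hyz ih =>
      have hyr := (SimpleGraph.reachable_iff_reflTransGen _ _).2 hy
      refine ih.trans (SimpleGraph.Adj.reachable ?_)
      rw [SimpleGraph.deleteEdges_adj]
      refine ⟨(SimpleGraph.deleteEdges_adj.1 hyz).1, ?_⟩
      simp only [Set.mem_singleton_iff, Sym2.eq_iff]
      rintro (⟨h, h'⟩ | ⟨h, h'⟩)
      · exact hb (h' ▸ hyr.trans hyz.reachable)
      · exact hb (h ▸ hyr)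

lemma edgeAdj_nonneg (G : SimpleGraph V) [DecidableRel G.Adj] (a b : G.Dart) :
    0 ≤ edgeAdj ℚ G a b := by
  unfold edgeAdj
  split_ifs <;> norm_num

lemma exists_closed_of_cycle (G : SimpleGraph V) [DecidableRel G.Adj] {v : V} (c : G.Walk v v)
    (hc : c.IsCycle) : ∃ k, 0 < k ∧ ∃ a, ((edgeAdj ℚ G) ^ k) a a ≠ 0 := by
  have h3 := hc.three_le_length
  let d : ∀ i, i < c.length → G.Dart := fun i hi =>
    ⟨(c.getVert i, c.getVert (i + 1)), c.adj_getVert_succ hi⟩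
  have hpow : ∀ i (hi : i < c.length), ((edgeAdj ℚ G) ^ i) (d 0 (by omega)) (d i hi) ≠ 0 := by
    intro i
    induction i with
    | zero => intro hi; simp
    | succ i ih =>
      intro hi
      refine mat_pow_succ_ne _ (edgeAdj_nonneg G) i _ _ _ (ih (by omega)) ?_
      have hne : c.getVert i ≠ c.getVert (i + 1 + 1) := by
        intro h
        rcases Nat.eq_zero_or_pos i with rfl | hi0
        · have := hc.getVert_injOn' (by simp) (by simp; omega) h
          omega
        · have := hc.getVert_injOn (by simp; omega) (by simp; omega) h
          omega
      simp [edgeAdj, d, hne]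
  refine ⟨c.length - 1 + 1, by omega, d 0 (by omega), ?_⟩
  refine mat_pow_succ_ne _ (edgeAdj_nonneg G) _ _ _ _ (hpow (c.length - 1) (by omega)) ?_
  have hne : c.getVert (c.length - 1) ≠ c.getVert 1 := by
    intro h
    have := hc.getVert_injOn (by simp; omega) (by simp; omega) h
    omega
  have hl : c.length - 1 + 1 = c.length := by omega
  simp [edgeAdj, d, hne, hl]

end GraphHelpers


/-- For a connected graph `X`, the eigenvalues of `N` are those of `D` (i.e. the characteristic
polynomials coincide) if and only if `X` is a tree. -/
theorem stmt3 (G : SimpleGraph V) [DecidableRel G.Adj] (hconn : G.Connected) :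
    (edgeLap ℚ G).charpoly = (degDiag ℚ G).charpoly ↔ G.IsAcyclic := by
 
  constructor
  · intro h v c hc
    obtain ⟨k, hk, a, ha⟩ := exists_closed_of_cycle G c hc
    exact ha (diag_pow_eq_zero _ _ (edgeAdj_nonneg G) h k hk a)
  · intro hG
    refine charpoly_eq_of_rank _ _ (dartRank G) ?_
    intro a b hab
    by_cases h : a.toProd.2 = b.toProd.1 ∧ a.toProd.1 ≠ b.toProd.2
    · exact dartRank_lt G hG a b h.1 h.2
    · exact absurd (by simp only [edgeAdj, if_neg h]) hab
end

section
/- Let X be a finite connected simple graph in which every vertex has degree at least 2 and some vertex has degree at least 3 (so X is not a cycle graph and has no pendant vertices). Then the edge adjacency matrix M = M(X) is irreducible: for all darts d, e of X there exists k ≥ 1 such that (M^k)_{d,e} > 0. -/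
open Matrix

variable {V : Type*} [Fintype V] [DecidableEq V]

/-- The non-backtracking step relation on darts. -/
def NBStep (G : SimpleGraph V) (d e : G.Dart) : Prop :=
  d.toProd.2 = e.toProd.1 ∧ d.toProd.1 ≠ e.toProd.2

instance (G : SimpleGraph V) : DecidableRel (NBStep G) := fun d e => by
  unfold NBStep; infer_instance

lemma NBStep.symm_symm {G : SimpleGraph V} {d e : G.Dart} (h : NBStep G d e) :
    NBStep G e.symm d.symm := ⟨h.1.symm, fun h' => h.2 h'.symm⟩

lemma nb_row_card (G : SimpleGraph V) [DecidableRel G.Adj] (x : G.Dart) :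
    (Finset.univ.filter (fun y => NBStep G x y)).card = G.degree x.snd - 1 := by
  rw [← G.dart_fst_fiber_card_eq_degree x.snd]
  have : Finset.univ.filter (fun y => NBStep G x y)
      = (Finset.univ.filter (fun y : G.Dart => y.fst = x.snd)).erase x.symm := by
    ext y
    simp only [Finset.mem_filter, Finset.mem_univ, true_and, Finset.mem_erase]
    constructor
    · rintro ⟨h1, h2⟩
      refine ⟨?_, h1.symm⟩
      rintro rfl
      exact h2 rfl
    · rintro ⟨h1, h2⟩
      refine ⟨h2.symm, fun h3 => h1 ?_⟩
      ext
      · exact h2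
      · exact h3.symm
  rw [this, Finset.card_erase_of_mem]
  simp

lemma nb_col_card (G : SimpleGraph V) [DecidableRel G.Adj] (y : G.Dart) :
    (Finset.univ.filter (fun x => NBStep G x y)).card = G.degree y.fst - 1 := by
  have := nb_row_card G y.symm
  rw [show y.symm.snd = y.fst from rfl] at this
  rw [← this]
  refine Finset.card_bij (fun x _ => x.symm) ?_ ?_ ?_
  · intro x hx
    simp only [Finset.mem_filter, Finset.mem_univ, true_and] at hx ⊢
    exact hx.symm_symm
  · intro a _ b _ h
    have := congrArg SimpleGraph.Dart.symm h
    simpa using this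
  · intro b hb
    simp only [Finset.mem_filter, Finset.mem_univ, true_and] at hb
    refine ⟨b.symm, ?_, by simp⟩
    simp only [Finset.mem_filter, Finset.mem_univ, true_and]
    simpa using hb.symm_symm

/-- A forward closed set of darts is backward closed. -/
lemma nb_back (G : SimpleGraph V) [DecidableRel G.Adj] (hmin : ∀ v : V, 2 ≤ G.degree v)
    (S : Finset G.Dart) (hS : ∀ x ∈ S, ∀ y, NBStep G x y → y ∈ S)
    (d e : G.Dart) (hde : NBStep G d e) (he : e ∈ S) : d ∈ S := by
  by_contra hd
  let c : V → ℚ := fun v => ((G.degree v - 1 : ℕ) : ℚ)⁻¹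
  have hc : ∀ v, 0 < c v := fun v => by
    have := hmin v
    have : 0 < G.degree v - 1 := by omega
    simp only [c]
    positivity
  have hc' : ∀ v, ((G.degree v - 1 : ℕ) : ℚ) * c v = 1 := fun v =>
    mul_inv_cancel₀ (fun h => (hc v).ne' (by simp only [c, h, _root_.inv_zero]))
  let P : G.Dart → G.Dart → ℚ := fun x y => if NBStep G x y then c y.fst else 0
  have hP : ∀ x y, 0 ≤ P x y := fun x y => by
    simp only [P]; split_ifs; exacts [(hc _).le, le_rfl]
  have hrow : ∀ x ∈ S, ∑ y ∈ S, P x y = 1 := by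
    intro x hx
    have h1 : ∑ y ∈ S, P x y = ∑ y, P x y := by
      apply Finset.sum_subset (Finset.subset_univ _)
      intro y _ hy
      exact if_neg fun h => hy (hS x hx y h)
    rw [h1, ← hc' x.snd, ← nb_row_card G x, ← nsmul_eq_mul, ← Finset.sum_const,
      Finset.sum_filter]
    refine Finset.sum_congr rfl fun y _ => ?_
    simp only [P]
    split_ifs with h
    · rw [show y.fst = x.snd from h.1.symm]
    · rfl
  have hcol : ∀ y, ∑ x, P x y = 1 := by
    intro y
    rw [← hc' y.fst, ← nb_col_card G y, ← nsmul_eq_mul, ← Finset.sum_const,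
      Finset.sum_filter]
  have hlt : ∑ y ∈ S, ∑ x ∈ S, P x y < ∑ y ∈ S, (1 : ℚ) := by
    refine Finset.sum_lt_sum (fun y _ => ?_) ⟨e, he, ?_⟩
    · rw [← hcol y]
      exact Finset.sum_le_sum_of_subset_of_nonneg (Finset.subset_univ _) fun x _ _ => hP x y
    · rw [← hcol e]
      refine Finset.sum_lt_sum_of_subset (Finset.subset_univ _) (Finset.mem_univ d) hd ?_
        fun x _ _ => hP x e
      simp only [P, if_pos hde]
      exact hc _
  rw [Finset.sum_comm, Finset.sum_congr rfl hrow] at hlt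
  exact lt_irrefl _ hlt

lemma nb_symm (G : SimpleGraph V) [DecidableRel G.Adj] (hmin : ∀ v : V, 2 ≤ G.degree v)
    {d e : G.Dart} (h : Relation.ReflTransGen (NBStep G) d e) :
    Relation.ReflTransGen (NBStep G) e d := by
  classical
  induction h with
  | refl => exact .refl
  | @tail b c _ hbc ih =>
    refine Relation.ReflTransGen.trans ?_ ih
    have := nb_back G hmin (Finset.univ.filter fun x => Relation.ReflTransGen (NBStep G) c x)
      (by
        intro x hx y hxy
        simp only [Finset.mem_filter, Finset.mem_univ, true_and] at hx ⊢
        exact hx.tail hxy) b c hbc (by simp [Relation.ReflTransGen.refl])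
    simpa using this

lemma nb_all (G : SimpleGraph V) [DecidableRel G.Adj] (hconn : G.Connected)
    (hmin : ∀ v : V, 2 ≤ G.degree v) (hbig : ∃ v : V, 3 ≤ G.degree v) (d e : G.Dart) :
    Relation.ReflTransGen (NBStep G) d e := by
  obtain ⟨v, hv⟩ := hbig
  have hS := @nb_symm V _ _ G _ hmin
  have step : ∀ {x y : G.Dart}, NBStep G x y → Relation.ReflTransGen (NBStep G) x y :=
    fun h => .single h
  -- two neighbours can always be avoided at v
  have third : ∀ a b : V, ∃ w, G.Adj v w ∧ w ≠ a ∧ w ≠ b := by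
    intro a b
    have h2 : ({a, b} : Finset V).card < (G.neighborFinset v).card := by
      rw [G.card_neighborFinset_eq_degree]
      exact lt_of_le_of_lt Finset.card_le_two (by omega)
    obtain ⟨w, hw, hw'⟩ := Finset.exists_mem_notMem_of_card_lt_card h2
    simp only [Finset.mem_insert, Finset.mem_singleton, not_or] at hw'
    exact ⟨w, by simpa using hw, hw'.1, hw'.2⟩
  obtain ⟨w0, hw0, -⟩ := third v v
  let d0 : G.Dart := ⟨(v, w0), hw0⟩
  have houtv : ∀ e : G.Dart, e.fst = v → Relation.ReflTransGen (NBStep G) e d0 := by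
    intro e he
    obtain ⟨w, hw, h1, h2⟩ := third e.snd w0
    let f : G.Dart := ⟨(w, v), hw.symm⟩
    have h3 : NBStep G f e := ⟨he.symm, h1⟩
    have h4 : NBStep G f d0 := ⟨rfl, h2⟩
    exact (hS (step h3)).trans (step h4)
  have hinv : ∀ e : G.Dart, e.fst = v → Relation.ReflTransGen (NBStep G) e.symm d0 := by
    intro e he
    obtain ⟨w, hw, h1, -⟩ := third e.snd w0
    let g : G.Dart := ⟨(v, w), hw⟩
    have h3 : NBStep G e.symm g := ⟨he, h1.symm⟩
    exact (step h3).trans (houtv g rfl)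
  have key : ∀ u, ∀ e : G.Dart, e.fst = u → Relation.ReflTransGen (NBStep G) e d0 ∧
      Relation.ReflTransGen (NBStep G) e.symm d0 := by
    intro u
    have hr : Relation.ReflTransGen G.Adj v u :=
      (SimpleGraph.reachable_iff_reflTransGen v u).mp (hconn.preconnected v u)
    induction hr with
    | refl => exact fun e he => ⟨houtv e he, hinv e he⟩
    | @tail b c _ hbc ih =>
      intro f hf
      let x : G.Dart := ⟨(b, c), hbc⟩
      obtain ⟨hx1, hx2⟩ := ih x rfl
      by_cases hfb : f.snd = b
      · have : f = x.symm := by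
          ext
          · exact hf
          · exact hfb
        rw [this]
        exact ⟨hx2, by simpa using hx1⟩
      · have h1 : NBStep G x f := ⟨hf.symm, fun h => hfb h.symm⟩
        exact ⟨(hS (step h1)).trans hx1, (step h1.symm_symm).trans hx2⟩
  exact ((key _ d rfl).1).trans (hS (key _ e rfl).1)

lemma edgeAdj_pow_nonneg (G : SimpleGraph V) [DecidableRel G.Adj] (k : ℕ) :
    ∀ d e, 0 ≤ (edgeAdj ℚ G ^ k) d e := by
  induction k with
  | zero => intro d e; rw [pow_zero, Matrix.one_apply]; split_ifs <;> norm_num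
  | succ k ih =>
    intro d e
    rw [pow_succ, Matrix.mul_apply]
    refine Finset.sum_nonneg fun x _ => mul_nonneg (ih _ _) ?_
    unfold edgeAdj; split_ifs <;> norm_num

lemma edgeAdj_pow_pos (G : SimpleGraph V) [DecidableRel G.Adj] {d e : G.Dart}
    (h : Relation.TransGen (NBStep G) d e) : ∃ k : ℕ, 1 ≤ k ∧ 0 < (edgeAdj ℚ G ^ k) d e := by
  have hM : ∀ {x y : G.Dart}, NBStep G x y → edgeAdj ℚ G x y = 1 := fun h => if_pos h
  induction h with
  | single h => exact ⟨1, le_rfl, by rw [pow_one, hM h]; norm_num⟩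
  | @tail b c _ hbc ih =>
    obtain ⟨k, hk, hp⟩ := ih
    refine ⟨k + 1, by omega, ?_⟩
    rw [pow_succ, Matrix.mul_apply]
    refine Finset.sum_pos' (fun x _ => mul_nonneg (edgeAdj_pow_nonneg G k _ _) ?_)
      ⟨b, Finset.mem_univ _, by rw [hM hbc, mul_one]; exact hp⟩
    unfold edgeAdj; split_ifs <;> norm_num

/-- If `X` is connected, every vertex has degree at least 2, and some vertex has degree at
least 3 (so `X` is not a cycle and has no pendant vertex), then the edge adjacency matrix is
irreducible. -/
theorem stmt15 (G : SimpleGraph V) [DecidableRel G.Adj] (hconn : G.Connected)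
    (hmin : ∀ v : V, 2 ≤ G.degree v) (hbig : ∃ v : V, 3 ≤ G.degree v) :
    ∀ d e : G.Dart, ∃ k : ℕ, 1 ≤ k ∧ 0 < (edgeAdj ℚ G ^ k) d e := by
  intro d e
  have h1 : 0 < (Finset.univ.filter (fun y => NBStep G d y)).card := by
    rw [nb_row_card]
    have := hmin d.snd
    omega
  obtain ⟨y, hy⟩ := Finset.card_pos.mp h1
  simp only [Finset.mem_filter, Finset.mem_univ, true_and] at hy
  exact edgeAdj_pow_pos G (Relation.TransGen.head' hy (nb_all G hconn hmin hbig y e))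
end
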